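/- Let P ⊆ ℤ^n_{≥0} be a polymatroid over [n] with rank function f and let g = Σ_{i∈[n]} f({i}) − f([n]). Then for every integer i with 0 ≤ i < r'_2(P), the coefficient of x^i in the interior polynomial satisfies [x^i]I_P(x) = C(g+i-1, i) − Σ_{j=0}^{i} C(g+i-1-j, i-j)·|C_j(P)|, where C(·,·) denotes the binomial coefficient. -/

import Mathlib

open Finset Polynomial

/-- `f` is the rank function of a polymatroid over the ground set `[n]` (encoded as `Fin n`):
normalization, monotonicity and submodularity. -/
def IsPolymatroidRank (n : ℕ) (f : Finset (Fin n) → ℕ) : Prop :=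
  f ∅ = 0 ∧ (∀ I J : Finset (Fin n), I ⊆ J → f I ≤ f J) ∧
    ∀ I J : Finset (Fin n), f (I ∪ J) + f (I ∩ J) ≤ f I + f J

/-- The set of bases of the polymatroid `P ⊆ ℤ^n_{≥0}` with rank function `f`:
all nonnegative integer vectors `a` with `∑_{i ∈ I} a i ≤ f I` for every `I ⊆ [n]`
and `∑_{i ∈ [n]} a i = f [n]`.  (Every such vector has entries `≤ f [n]`, whence the
bounding box used to produce a `Finset`.) -/
def polyBases (n : ℕ) (f : Finset (Fin n) → ℕ) : Finset (Fin n → ℤ) :=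
  ((Finset.univ : Finset (Fin n → Fin (f Finset.univ + 1))).image
      (fun a i => ((a i : ℕ) : ℤ))).filter
    fun a => (∀ i, 0 ≤ a i) ∧ (∀ I : Finset (Fin n), ∑ i ∈ I, a i ≤ (f I : ℤ)) ∧
      ∑ i, a i = (f Finset.univ : ℤ)

/-- The externally active indices of a basis `a`: those `i` such that
`a + e_i - e_j ∉ P` for every `j < i`. -/
def extAct (n : ℕ) (f : Finset (Fin n) → ℕ) (a : Fin n → ℤ) : Finset (Fin n) :=
  Finset.univ.filter fun i => ∀ j, j < i →
    (fun t => a t + (if t = i then 1 else 0) - (if t = j then 1 else 0)) ∉ polyBases n f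

/-- The internally active indices of a basis `a`: those `i` such that
`a - e_i + e_j ∉ P` for every `j < i`. -/
def intAct (n : ℕ) (f : Finset (Fin n) → ℕ) (a : Fin n → ℤ) : Finset (Fin n) :=
  Finset.univ.filter fun i => ∀ j, j < i →
    (fun t => a t - (if t = i then 1 else 0) + (if t = j then 1 else 0)) ∉ polyBases n f

/-- The exterior polynomial `X_P(y) = ∑_{a ∈ P} y^(n - |Ext(a)|)`. -/
noncomputable def exteriorPoly (n : ℕ) (f : Finset (Fin n) → ℕ) : Polynomial ℤ :=
  ∑ a ∈ polyBases n f, X ^ (n - (extAct n f a).card)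

/-- The interior polynomial `I_P(x) = ∑_{a ∈ P} x^(n - |Int(a)|)`. -/
noncomputable def interiorPoly (n : ℕ) (f : Finset (Fin n) → ℕ) : Polynomial ℤ :=
  ∑ a ∈ polyBases n f, X ^ (n - (intAct n f a).card)

/-- `r_k(P) = min { n - |F| : F ⊆ [n], f F ≤ f [n] - k }` (junk value `0` if no such `F`). -/
noncomputable def rk (n : ℕ) (f : Finset (Fin n) → ℕ) (k : ℕ) : ℕ :=
  sInf {m | ∃ F : Finset (Fin n), (f F : ℤ) ≤ (f Finset.univ : ℤ) - k ∧ m = n - F.card}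

/-- `r'_k(P) = min { |F| : F ⊆ [n], ∑_{i ∈ F} f {i} - f F ≥ k }` (junk value `0` if no such `F`). -/
noncomputable def rk' (n : ℕ) (f : Finset (Fin n) → ℕ) (k : ℕ) : ℕ :=
  sInf {m | ∃ F : Finset (Fin n), (k : ℤ) ≤ (∑ i ∈ F, (f {i} : ℤ)) - (f F : ℤ) ∧ m = F.card}

/-- `H_j(P)`: the flats `H` (i.e. `f (H ∪ {e}) > f H` for all `e ∉ H`) with
`f H = f [n] - 1` and `n - |H| = j`. -/
def Hset (n : ℕ) (f : Finset (Fin n) → ℕ) (j : ℕ) : Finset (Finset (Fin n)) :=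
  Finset.univ.filter fun H =>
    (∀ e, e ∉ H → f H < f (insert e H)) ∧ (f H : ℤ) = (f Finset.univ : ℤ) - 1 ∧
      n - H.card = j

/-- `C_j(P)`: the sets `C` with `|C| = j`, `∑_{i ∈ C} f {i} - f C = 1` and
`∑_{i ∈ C \ {j'}} f {i} = f (C \ {j'})` for every `j' ∈ C`. -/
def Cset (n : ℕ) (f : Finset (Fin n) → ℕ) (j : ℕ) : Finset (Finset (Fin n)) :=
  Finset.univ.filter fun C => C.card = j ∧
    (∑ i ∈ C, (f {i} : ℤ)) - (f C : ℤ) = 1 ∧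
    ∀ j' ∈ C, (∑ i ∈ C.erase j', (f {i} : ℤ)) = (f (C.erase j') : ℤ)

/-- The dual rank function `f*(I) = f([n] \ I) - f([n]) + ∑_{i ∈ I} f {i}`
(the subtraction is exact for a polymatroid rank function). -/
def fdual (n : ℕ) (f : Finset (Fin n) → ℕ) : Finset (Fin n) → ℕ :=
  fun I => f (Finset.univ \ I) + (∑ i ∈ I, f {i}) - f Finset.univ

def okv (n : ℕ) (f : Finset (Fin n) → ℕ) (z : Fin n → ℤ) : Prop :=
  ∀ I : Finset (Fin n), ∑ i ∈ I, z i ≤ (f I : ℤ)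

lemma mem_PB {n : ℕ} {f : Finset (Fin n) → ℕ} (hf : IsPolymatroidRank n f) (a : Fin n → ℤ) :
    a ∈ polyBases n f ↔ okv n f a ∧ ∑ i, a i = (f Finset.univ : ℤ) := by
  unfold polyBases okv
  simp only [Finset.mem_filter]
  constructor
  · rintro ⟨_, _, h1, h2⟩
    exact ⟨h1, h2⟩
  · rintro ⟨h1, h2⟩
    have hnn : ∀ i, 0 ≤ a i := by
      intro i
      have e1 := h1 (Finset.univ.erase i)
      have e2 := hf.2.1 (Finset.univ.erase i) Finset.univ (Finset.subset_univ _)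
      have e3 := Finset.add_sum_erase Finset.univ a (Finset.mem_univ i)
      have e4 : (f (Finset.univ.erase i) : ℤ) ≤ f Finset.univ := by exact_mod_cast e2
      linarith
    refine ⟨?_, hnn, h1, h2⟩
    rw [Finset.mem_image]
    have hle : ∀ i, a i ≤ f Finset.univ := by
      intro i
      rw [← h2]
      exact Finset.single_le_sum (fun j _ => hnn j) (Finset.mem_univ i)
    refine ⟨fun i => ⟨(a i).toNat, ?_⟩, Finset.mem_univ _, ?_⟩
    · have := hle i
      have := hnn i
      omega
    · funext i
      have := hnn i
      simp
      omega

lemma submod_int {n : ℕ} {f : Finset (Fin n) → ℕ} (hf : IsPolymatroidRank n f)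
    (I J : Finset (Fin n)) :
    (f (I ∪ J) : ℤ) + f (I ∩ J) ≤ f I + f J := by
  exact_mod_cast hf.2.2 I J

lemma tight_both {n : ℕ} {f : Finset (Fin n) → ℕ} (hf : IsPolymatroidRank n f)
    {z : Fin n → ℤ} (hz : okv n f z) {I J : Finset (Fin n)}
    (hI : ∑ i ∈ I, z i = f I) (hJ : ∑ i ∈ J, z i = f J) :
    ∑ i ∈ I ∪ J, z i = f (I ∪ J) ∧ ∑ i ∈ I ∩ J, z i = f (I ∩ J) := by
  have h1 := submod_int hf I J
  have h2 := hz (I ∪ J)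
  have h3 := hz (I ∩ J)
  have h4 := Finset.sum_union_inter (s₁ := I) (s₂ := J) (f := z)
  constructor <;> linarith

lemma sum_bump {n : ℕ} (I : Finset (Fin n)) (z : Fin n → ℤ) (j : Fin n) :
    ∑ t ∈ I, (z t + (if t = j then 1 else 0)) = ∑ t ∈ I, z t + (if j ∈ I then 1 else 0) := by
  rw [Finset.sum_add_distrib]
  simp

lemma sum_swap {n : ℕ} (I : Finset (Fin n)) (z : Fin n → ℤ) (i j : Fin n) :
    ∑ t ∈ I, (z t - (if t = i then 1 else 0) + (if t = j then 1 else 0)) =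
      ∑ t ∈ I, z t - (if i ∈ I then 1 else 0) + (if j ∈ I then 1 else 0) := by
  rw [Finset.sum_add_distrib, Finset.sum_sub_distrib]
  simp

lemma exists_base {n : ℕ} {f : Finset (Fin n) → ℕ} (hf : IsPolymatroidRank n f) :
    ∀ (m : ℕ) (z : Fin n → ℤ), okv n f z → (f Finset.univ : ℤ) - ∑ i, z i = m →
      ∃ a ∈ polyBases n f, ∀ i, z i ≤ a i := by
  intro m
  induction m with
  | zero =>
    intro z hz h
    refine ⟨z, (mem_PB hf z).2 ⟨hz, ?_⟩, fun i => le_rfl⟩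
    push_cast at h
    linarith
  | succ m ih =>
    intro z hz h
    by_cases hex : ∃ j, okv n f (fun t => z t + (if t = j then 1 else 0))
    · obtain ⟨j, hj⟩ := hex
      obtain ⟨a, ha, hza⟩ := ih _ hj (by
        rw [sum_bump]
        simp
        push_cast at h
        linarith)
      refine ⟨a, ha, fun i => le_trans ?_ (hza i)⟩
      split_ifs <;> linarith
    · exfalso
      push Not at hex
      have ht : ∀ j, ∃ I : Finset (Fin n), j ∈ I ∧ ∑ i ∈ I, z i = f I := by
        intro j
        have := hex j
        unfold okv at this
        push Not at this
        obtain ⟨I, hI⟩ := this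
        rw [sum_bump] at hI
        have h2 := hz I
        by_cases hjI : j ∈ I
        · rw [if_pos hjI] at hI
          exact ⟨I, hjI, by linarith⟩
        · rw [if_neg hjI] at hI
          linarith
      choose T hT1 hT2 using ht
      have key : ∀ S : Finset (Fin n), ∑ i ∈ S.biUnion T, z i = f (S.biUnion T) := by
        intro S
        induction S using Finset.induction_on with
        | empty => simp [hf.1]
        | insert x S hx ih2 =>
          rw [Finset.biUnion_insert]
          exact (tight_both hf hz (hT2 x) ih2).1
      have hu : (Finset.univ : Finset (Fin n)).biUnion T = Finset.univ := by
        ext x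
        simp only [Finset.mem_biUnion, Finset.mem_univ, true_and, iff_true]
        exact ⟨x, hT1 x⟩
      have := key Finset.univ
      rw [hu] at this
      push_cast at h
      linarith

lemma exchange {n : ℕ} {f : Finset (Fin n) → ℕ} (hf : IsPolymatroidRank n f)
    {a a' : Fin n → ℤ} (ha : a ∈ polyBases n f) (ha' : a' ∈ polyBases n f) {j : Fin n}
    (hj : a j < a' j) :
    ∃ k, a' k < a k ∧
      (fun t => a t - (if t = k then 1 else 0) + (if t = j then 1 else 0)) ∈ polyBases n f := by
  rw [mem_PB hf] at ha ha'
  obtain ⟨I, hI, hmin⟩ := Finset.exists_min_image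
    (Finset.univ.filter fun I : Finset (Fin n) => j ∈ I ∧ ∑ i ∈ I, a i = f I) Finset.card
    ⟨Finset.univ, by simp [ha.2]⟩
  simp only [Finset.mem_filter, Finset.mem_univ, true_and] at hI hmin
  have hsub : ∀ J : Finset (Fin n), j ∈ J → ∑ i ∈ J, a i = f J → I ⊆ J := by
    intro J hJ1 hJ2
    have h1 := hmin (I ∩ J) ⟨by simp [hI.1, hJ1], (tight_both hf ha.1 hI.2 hJ2).2⟩
    have h2 := Finset.eq_of_subset_of_card_le Finset.inter_subset_left h1
    exact Finset.inter_eq_left.1 h2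
  have : ∃ k ∈ I, a' k < a k := by
    by_contra hcon
    push Not at hcon
    have := Finset.sum_lt_sum hcon ⟨j, hI.1, hj⟩
    have h2 := ha'.1 I
    linarith [hI.2]
  obtain ⟨k, hkI, hk⟩ := this
  refine ⟨k, hk, (mem_PB hf _).2 ⟨?_, ?_⟩⟩
  · intro J
    rw [sum_swap]
    have h1 := ha.1 J
    by_cases hjJ : j ∈ J
    · by_cases hkJ : k ∈ J
      · simp [hjJ, hkJ, h1]
      · have : ∑ i ∈ J, a i ≠ f J := fun h => hkJ (hsub J hjJ h hkI)
        have := lt_of_le_of_ne h1 this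
        simp [hjJ, hkJ]
        linarith
    · rw [if_neg hjJ]
      split_ifs <;> linarith
  · rw [sum_swap]
    simp [ha.2]

lemma part_exists {n : ℕ} {f : Finset (Fin n) → ℕ} (hf : IsPolymatroidRank n f)
    {z : Fin n → ℤ} (hz : okv n f z) :
    ∃ a ∈ polyBases n f, (∀ i, z i ≤ a i) ∧ ∀ k, k ∉ intAct n f a → z k = a k := by
  have h0 := hz Finset.univ
  obtain ⟨a0, ha0, hza0⟩ := exists_base hf ((f Finset.univ : ℤ) - ∑ i, z i).toNat z hz (by omega)
  obtain ⟨a, ha, hmin⟩ := Finset.exists_min_image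
    ((polyBases n f).filter fun a => ∀ i, z i ≤ a i)
    (fun a => ∑ i : Fin n, (i.val : ℤ) * a i) ⟨a0, by simp [ha0, hza0]⟩
  simp only [Finset.mem_filter] at ha hmin
  refine ⟨a, ha.1, ha.2, ?_⟩
  intro k hk
  by_contra hne
  have hlt : z k < a k := lt_of_le_of_ne (ha.2 k) hne
  simp only [intAct, Finset.mem_filter, Finset.mem_univ, true_and] at hk
  push Not at hk
  obtain ⟨j, hjk, hj⟩ := hk
  have := hmin _ ⟨hj, by
    intro i
    have := ha.2 i
    by_cases hik : i = k
    · subst hik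
      simp only [if_true]
      split_ifs <;> linarith
    · simp only [if_neg hik]
      split_ifs <;> linarith⟩
  have e : ∑ i : Fin n, (i.val : ℤ) *
      (a i - (if i = k then 1 else 0) + (if i = j then 1 else 0)) =
      ∑ i : Fin n, (i.val : ℤ) * a i - k.val + j.val := by
    simp only [mul_add, mul_sub, Finset.sum_add_distrib, Finset.sum_sub_distrib]
    simp
  rw [e] at this
  have : (j.val : ℤ) < k.val := by exact_mod_cast hjk
  linarith

lemma part_unique_aux {n : ℕ} {f : Finset (Fin n) → ℕ} (hf : IsPolymatroidRank n f)
    {z a a' : Fin n → ℤ} (ha : a ∈ polyBases n f) (ha' : a' ∈ polyBases n f)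
    (h1 : ∀ k, k ∉ intAct n f a → z k = a k)
    (hza' : ∀ i, z i ≤ a' i) {j : Fin n} (hmin : ∀ k, k < j → a k = a' k)
    (hj : a j < a' j) : False := by
  obtain ⟨k, hk, hmem⟩ := exchange hf ha ha' hj
  have hjk : j < k := by
    rcases lt_trichotomy j k with h | h | h
    · exact h
    · subst h
      linarith
    · have := hmin k h
      linarith
  have hkn : k ∉ intAct n f a := by
    simp only [intAct, Finset.mem_filter, Finset.mem_univ, true_and]
    push Not
    exact ⟨j, hjk, hmem⟩
  have := h1 k hkn
  have := hza' k
  linarith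

lemma part_unique {n : ℕ} {f : Finset (Fin n) → ℕ} (hf : IsPolymatroidRank n f)
    {z a a' : Fin n → ℤ} (ha : a ∈ polyBases n f) (ha' : a' ∈ polyBases n f)
    (hza : ∀ i, z i ≤ a i) (h1 : ∀ k, k ∉ intAct n f a → z k = a k)
    (hza' : ∀ i, z i ≤ a' i) (h1' : ∀ k, k ∉ intAct n f a' → z k = a' k) : a = a' := by
  by_contra hne
  have : (Finset.univ.filter fun i => a i ≠ a' i).Nonempty := by
    by_contra h
    rw [Finset.not_nonempty_iff_eq_empty, Finset.filter_eq_empty_iff] at h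
    apply hne
    funext i
    simpa using h (Finset.mem_univ i)
  obtain ⟨j, hj, hmin⟩ := Finset.exists_min_image _ id this
  simp only [Finset.mem_filter, Finset.mem_univ, true_and, id] at hj hmin
  have hm : ∀ k, k < j → a k = a' k := by
    intro k hk
    by_contra h
    exact absurd (hmin k h) (not_le.2 hk)
  rcases lt_or_gt_of_ne hj with h | h
  · exact part_unique_aux hf ha ha' h1 hza' hm h
  · exact part_unique_aux hf ha' ha h1' hza (fun k hk => (hm k hk).symm) h

/-- functions supported in `S` with sum at most `s` -/
def Wset (n : ℕ) (S : Finset (Fin n)) (s : ℕ) : Finset (Fin n → ℕ) :=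
  (Finset.range (s + 1)).biUnion fun t => Finset.piAntidiag S t

lemma mem_Wset {n : ℕ} {S : Finset (Fin n)} {s : ℕ} {c : Fin n → ℕ} :
    c ∈ Wset n S s ↔ (∀ i, i ∉ S → c i = 0) ∧ ∑ i, c i ≤ s := by
  simp only [Wset, Finset.mem_biUnion, Finset.mem_range, Finset.mem_piAntidiag]
  constructor
  · rintro ⟨t, ht, hs, hsupp⟩
    have h0 : ∀ i, i ∉ S → c i = 0 := by
      intro i hi
      by_contra h
      exact hi (hsupp i h)
    refine ⟨h0, ?_⟩
    rw [← Finset.sum_subset (Finset.subset_univ S) (fun i _ hi => h0 i hi)]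
    change S.sum c ≤ s
    omega
  · rintro ⟨h0, hs⟩
    rw [← Finset.sum_subset (Finset.subset_univ S) (fun i _ hi => h0 i hi)] at hs
    refine ⟨S.sum c, Nat.lt_succ_of_le hs, rfl, ?_⟩
    intro i hi
    by_contra h
    exact hi (h0 i h)

lemma card_Wset {n : ℕ} (S : Finset (Fin n)) (s : ℕ) :
    (Wset n S s).card = (s + S.card).choose S.card := by
  induction S using Finset.induction_on generalizing s with
  | empty =>
    have : Wset n ∅ s = {fun _ => 0} := by
      ext c
      rw [mem_Wset, Finset.mem_singleton]
      constructor
      · rintro ⟨h, _⟩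
        funext i
        exact h i (by simp)
      · rintro rfl
        simp
    rw [this]
    simp
  | insert x S hx ih =>
    induction s with
    | zero =>
      have : Wset n (insert x S) 0 = {fun _ => 0} := by
        ext c
        rw [mem_Wset, Finset.mem_singleton]
        constructor
        · rintro ⟨_, h⟩
          funext i
          have := Finset.single_le_sum (f := c) (fun j _ => Nat.zero_le _) (Finset.mem_univ i)
          omega
        · rintro rfl
          simp
      rw [this]
      simp
    | succ s ihs =>
      have hinj : Function.Injective
          (fun (c : Fin n → ℕ) (t : Fin n) => c t + (if t = x then 1 else 0)) := by
        intro c c' h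
        funext t
        have := congrFun h t
        simpa using this
      have hun : Wset n (insert x S) (s + 1) = Wset n S (s + 1) ∪
          (Wset n (insert x S) s).image
            (fun (c : Fin n → ℕ) (t : Fin n) => c t + (if t = x then 1 else 0)) := by
        ext c
        rw [Finset.mem_union, Finset.mem_image, mem_Wset, mem_Wset]
        constructor
        · rintro ⟨h1, h2⟩
          by_cases hc : c x = 0
          · left
            refine ⟨fun i hi => ?_, h2⟩
            by_cases hix : i = x
            · rw [hix, hc]
            · exact h1 i (by simp [hix, hi])
          · right
            have hback : (fun t => (c t - (if t = x then 1 else 0)) + (if t = x then 1 else 0))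
                = c := by
              funext t
              split_ifs with h
              · subst h
                omega
              · omega
            refine ⟨fun t => c t - (if t = x then 1 else 0), mem_Wset.2 ⟨?_, ?_⟩, hback⟩
            · intro i hi
              rw [h1 i hi]
              simp
            · rw [← hback, Finset.sum_add_distrib] at h2
              simp only [Finset.sum_ite_eq', Finset.mem_univ, if_true] at h2
              omega
        · rintro (⟨h1, h2⟩ | ⟨c', hc', rfl⟩)
          · exact ⟨fun i hi => h1 i (fun h => hi (Finset.mem_insert_of_mem h)), h2⟩
          · rw [mem_Wset] at hc'
            refine ⟨fun i hi => ?_, ?_⟩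
            · have : i ≠ x := by
                rintro rfl
                simp at hi
              simp [hc'.1 i hi, this]
            · rw [Finset.sum_add_distrib]
              simp only [Finset.sum_ite_eq', Finset.mem_univ, if_true]
              omega
      have hdis : Disjoint (Wset n S (s + 1)) ((Wset n (insert x S) s).image
            (fun (c : Fin n → ℕ) (t : Fin n) => c t + (if t = x then 1 else 0))) := by
        rw [Finset.disjoint_left]
        intro c hc hc2
        rw [mem_Wset] at hc
        rw [Finset.mem_image] at hc2
        obtain ⟨c', _, rfl⟩ := hc2
        have := hc.1 x hx
        simp at this
      rw [hun, Finset.card_union_of_disjoint hdis, Finset.card_image_of_injective _ hinj, ihs, ih,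
        Finset.card_insert_of_notMem hx]
      have e1 : s + 1 + (S.card + 1) = (s + 1 + S.card) + 1 := by ring
      have e2 : s + (S.card + 1) = s + 1 + S.card := by ring
      rw [e1, e2, Nat.choose_succ_succ]

lemma choose_conv (h k n : ℕ) :
    ∑ i ∈ Finset.range (n + 1), (h + i).choose i * (k + (n - i)).choose (n - i) =
      (h + k + 1 + n).choose n := by
  have key := congrArg (fun u => PowerSeries.coeff n (Units.val u))
    (PowerSeries.invOneSubPow_add ℤ (h + 1) (k + 1))
  have e : h + 1 + (k + 1) = (h + k + 1) + 1 := by ring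
  simp only [e, Units.val_mul, PowerSeries.invOneSubPow_val_succ_eq_mk_add_choose,
    PowerSeries.coeff_mul, PowerSeries.coeff_mk] at key
  rw [Finset.Nat.sum_antidiagonal_eq_sum_range_succ_mk] at key
  have c1 : ∀ a b : ℕ, (a + b).choose b = (a + b).choose a := fun a b => by
    rw [Nat.choose_symm_add]
  rw [c1 (h + k + 1) n]
  have := key.symm
  simp only [c1]
  exact_mod_cast this

lemma choose_low (k m : ℕ) : (k + 1) ^ m ≤ m.factorial * (k + m).choose m := by
  rw [← Nat.ascFactorial_eq_factorial_mul_choose]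
  exact Nat.pow_succ_le_ascFactorial (k + 1) m

lemma choose_up (k m : ℕ) : (k + m).choose m ≤ (k + 1) ^ m := by
  induction m with
  | zero => simp
  | succ m ih =>
    have h := Nat.add_one_mul_choose_eq (k + m) m
    have h2 : (k + m + 1) ≤ (k + 1) * (m + 1) := by nlinarith
    have h3 : (k + (m + 1)).choose (m + 1) * (m + 1) ≤ (k + 1) ^ (m + 1) * (m + 1) := by
      calc (k + (m + 1)).choose (m + 1) * (m + 1) = (k + m + 1) * (k + m).choose m := h.symm
        _ ≤ ((k + 1) * (m + 1)) * (k + 1) ^ m := Nat.mul_le_mul h2 ih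
        _ = (k + 1) ^ (m + 1) * (m + 1) := by ring
    exact Nat.le_of_mul_le_mul_right h3 (Nat.succ_pos m)

lemma asymp (n r : ℕ) (hr : r ≤ n) (e : ℕ → ℤ) (M : ℤ)
    (h : ∀ k : ℕ, |∑ i ∈ Finset.range (n + 1), e i * ((k + (n - i)).choose (n - i) : ℤ)| ≤
      M * ((k : ℤ) + 1) ^ (n - r)) : ∀ i, i < r → e i = 0 := by
  intro i
  induction i using Nat.strong_induction_on with
  | _ i ih =>
    intro hi
    by_contra hne
    have hM : 0 ≤ M := by
      have := le_trans (abs_nonneg _) (h 0)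
      simpa using this
    set A : ℤ := ∑ j ∈ Finset.range (n + 1), |e j| with hA
    have hA0 : 0 ≤ A := Finset.sum_nonneg fun j _ => abs_nonneg _
    have key : ∀ k : ℕ, ((k : ℤ) + 1) ^ (n - i) ≤
        ((n - i).factorial : ℤ) * ((M + A) * ((k : ℤ) + 1) ^ (n - i - 1)) := by
      intro k
      have hk1 : (1 : ℤ) ≤ (k : ℤ) + 1 := by omega
      have h1 : ((k : ℤ) + 1) ^ (n - i) ≤
          ((n - i).factorial : ℤ) * ((k + (n - i)).choose (n - i) : ℤ) := by
        exact_mod_cast choose_low k (n - i)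
      refine le_trans h1 (mul_le_mul_of_nonneg_left ?_ (by positivity))
      have hmem : i ∈ Finset.range (n + 1) := Finset.mem_range.2 (by omega)
      have hsplit := Finset.add_sum_erase (Finset.range (n + 1))
        (fun i => e i * ((k + (n - i)).choose (n - i) : ℤ)) hmem
      have hrest : |∑ j ∈ (Finset.range (n + 1)).erase i,
          e j * ((k + (n - j)).choose (n - j) : ℤ)| ≤ A * ((k : ℤ) + 1) ^ (n - i - 1) := by
        refine le_trans (Finset.abs_sum_le_sum_abs _ _) ?_
        rw [hA, Finset.sum_mul]
        refine le_trans (Finset.sum_le_sum (g := fun j => |e j| * ((k : ℤ) + 1) ^ (n - i - 1)) ?_)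
          (Finset.sum_le_sum_of_subset_of_nonneg (Finset.erase_subset _ _) ?_)
        · intro j hj
          rw [Finset.mem_erase, Finset.mem_range] at hj
          rcases lt_or_gt_of_ne hj.1 with hji | hji
          · rw [ih j hji (by omega)]
            simp
          · rw [abs_mul]
            refine mul_le_mul_of_nonneg_left ?_ (abs_nonneg _)
            rw [abs_of_nonneg (by positivity)]
            calc ((k + (n - j)).choose (n - j) : ℤ) ≤ ((k : ℤ) + 1) ^ (n - j) := by
                  exact_mod_cast choose_up k (n - j)
              _ ≤ _ := pow_le_pow_right₀ hk1 (by omega)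
        · intro j _ _
          positivity
      have hk := h k
      rw [← hsplit] at hk
      have h2 : M * ((k : ℤ) + 1) ^ (n - r) ≤ M * ((k : ℤ) + 1) ^ (n - i - 1) :=
        mul_le_mul_of_nonneg_left (pow_le_pow_right₀ hk1 (by omega)) hM
      have h3 : |e i * ((k + (n - i)).choose (n - i) : ℤ)| ≤
          (M + A) * ((k : ℤ) + 1) ^ (n - i - 1) := by
        rw [abs_le] at hk hrest ⊢
        constructor <;> nlinarith
      refine le_trans ?_ h3
      rw [abs_mul, abs_of_nonneg (a := ((k + (n - i)).choose (n - i) : ℤ))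
        (by positivity)]
      have : 1 ≤ |e i| := Int.one_le_abs hne
      have h4 : (0 : ℤ) ≤ ((k + (n - i)).choose (n - i) : ℤ) := by positivity
      nlinarith
    have hk := key (((n - i).factorial : ℤ) * (M + A)).toNat
    have hB : 0 ≤ ((n - i).factorial : ℤ) * (M + A) := by positivity
    rw [Int.toNat_of_nonneg hB] at hk
    set B := ((n - i).factorial : ℤ) * (M + A)
    have hpow : (B + 1) ^ (n - i) = (B + 1) ^ (n - i - 1) * (B + 1) := by
      rw [← pow_succ]
      congr 1
      omega
    have hpos : 0 < (B + 1) ^ (n - i - 1) := by positivity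
    rw [hpow, ← mul_assoc] at hk
    change _ ≤ B * _ at hk
    nlinarith

lemma conv_shift (g k n j : ℕ) (hg : 1 ≤ g) (hj : j ≤ n) :
    ∑ i ∈ Finset.range (n + 1), (if j ≤ i then ((g + i - 1 - j).choose (i - j) : ℤ) else 0) *
      ((k + (n - i)).choose (n - i) : ℤ) = ((g + k + (n - j)).choose (n - j) : ℤ) := by
  obtain ⟨m, rfl⟩ := Nat.exists_eq_add_of_le hj
  obtain ⟨h, rfl⟩ := Nat.exists_eq_add_of_le' hg
  rw [show j + m + 1 = j + (m + 1) by ring, Finset.sum_range_add]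
  rw [Finset.sum_eq_zero (s := Finset.range j)]
  · rw [zero_add]
    have := choose_conv h k m
    rw [show j + m - j = m by omega, show h + 1 + k + m = h + k + 1 + m by ring, ← this]
    push_cast
    refine Finset.sum_congr rfl fun i hi => ?_
    rw [if_pos (by omega), show h + 1 + (j + i) - 1 - j = h + i by omega,
      show j + i - j = i by omega, show j + m - (j + i) = m - i by omega]
  · intro i hi
    rw [Finset.mem_range] at hi
    rw [if_neg (by omega), zero_mul]

lemma coeff_sum {n : ℕ} (f : Finset (Fin n) → ℕ) (k : ℕ) :
    ∑ i ∈ Finset.range (n + 1), (interiorPoly n f).coeff i *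
      ((k + (n - i)).choose (n - i) : ℤ) =
    ∑ a ∈ polyBases n f, ((k + (intAct n f a).card).choose (intAct n f a).card : ℤ) := by
  unfold interiorPoly
  simp only [Polynomial.finsetSum_coeff, Polynomial.coeff_X_pow, Finset.sum_mul]
  rw [Finset.sum_comm]
  refine Finset.sum_congr rfl fun a _ => ?_
  have hc : (intAct n f a).card ≤ n := by
    simpa using Finset.card_le_univ (intAct n f a)
  rw [Finset.sum_eq_single (n - (intAct n f a).card)]
  · rw [if_pos rfl, one_mul, show n - (n - (intAct n f a).card) = (intAct n f a).card by omega]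
  · intro b _ hb
    rw [if_neg hb, zero_mul]
  · intro h
    exact absurd (Finset.mem_range.2 (by omega)) h

/-- the point `u - c` -/
def zvec (n : ℕ) (f : Finset (Fin n) → ℕ) (c : Fin n → ℕ) : Fin n → ℤ :=
  fun t => (f {t} : ℤ) - c t

open Classical in
lemma card_good {n : ℕ} {f : Finset (Fin n) → ℕ} (hf : IsPolymatroidRank n f)
    (g : ℕ) (hg : g + f Finset.univ = ∑ i : Fin n, f {i}) (k : ℕ) :
    ((Wset n Finset.univ (g + k)).filter fun c => okv n f (zvec n f c)).card =
    ∑ a ∈ polyBases n f, (k + (intAct n f a).card).choose (intAct n f a).card := by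
  have hgz : (g : ℤ) + f Finset.univ = ∑ i : Fin n, (f {i} : ℤ) := by exact_mod_cast hg
  have hcard : (∑ a ∈ polyBases n f, (k + (intAct n f a).card).choose (intAct n f a).card) =
      ((polyBases n f).sigma fun a => Wset n (intAct n f a) k).card := by
    rw [Finset.card_sigma]
    exact Finset.sum_congr rfl fun a _ => (card_Wset _ _).symm
  rw [hcard]
  symm
  have hle : ∀ a ∈ polyBases n f, ∀ t, a t ≤ f {t} := by
    intro a ha t
    have := ((mem_PB hf a).1 ha).1 {t}
    simpa using this
  have hz : ∀ a ∈ polyBases n f, ∀ w : Fin n → ℕ,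
      zvec n f (fun t => ((f {t} : ℤ) - a t + w t).toNat) = fun t => a t - w t := by
    intro a ha w
    funext t
    have := hle a ha t
    unfold zvec
    dsimp only
    omega
  refine Finset.card_bij (fun p _ t => ((f {t} : ℤ) - p.1 t + p.2 t).toNat) ?_ ?_ ?_
  · rintro ⟨a, w⟩ hp
    rw [Finset.mem_sigma] at hp
    obtain ⟨ha, hw⟩ := hp
    dsimp only at ha hw ⊢
    rw [mem_Wset] at hw
    rw [Finset.mem_filter, mem_Wset]
    have ha2 := (mem_PB hf a).1 ha
    refine ⟨⟨fun i hi => absurd (Finset.mem_univ i) hi, ?_⟩, ?_⟩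
    · zify
      have : ∀ t, max ((f {t} : ℤ) - a t + w t) 0 = (f {t} : ℤ) - a t + w t := by
        intro t
        have := hle a ha t
        omega
      simp only [Int.toNat_eq_max, this]
      rw [Finset.sum_add_distrib, Finset.sum_sub_distrib, ha2.2, ← hgz]
      have : (∑ i, (w i : ℤ)) ≤ k := by exact_mod_cast hw.2
      linarith
    · rw [hz a ha w]
      intro I
      refine le_trans (Finset.sum_le_sum fun i _ => ?_) (ha2.1 I)
      omega
  · rintro ⟨a, w⟩ hp ⟨a', w'⟩ hp' heq
    rw [Finset.mem_sigma] at hp hp'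
    obtain ⟨ha, hw⟩ := hp
    obtain ⟨ha', hw'⟩ := hp'
    dsimp only at ha hw ha' hw' heq
    rw [mem_Wset] at hw hw'
    have h1 := hz a ha w
    rw [heq, hz a' ha' w'] at h1
    have haa : a = a' := by
      refine part_unique hf (z := fun t => a t - w t) ha ha' ?_ ?_ ?_ ?_
      · intro i
        omega
      · intro i hi
        have := hw.1 i hi
        omega
      · intro i
        have := congrFun h1 i
        omega
      · intro i hi
        have := congrFun h1 i
        have := hw'.1 i hi
        omega
    subst haa
    have : w = w' := by
      funext t
      have := congrFun h1 t
      omega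
    rw [this]
  · intro c hc
    rw [Finset.mem_filter, mem_Wset] at hc
    obtain ⟨⟨_, hs⟩, hok⟩ := hc
    obtain ⟨a, ha, h1, h2⟩ := part_exists hf hok
    have ha2 := (mem_PB hf a).1 ha
    have hcoe : ∀ t, (((a t - zvec n f c t).toNat : ℕ) : ℤ) = a t - zvec n f c t := by
      intro t
      have := h1 t
      omega
    refine ⟨⟨a, fun t => (a t - zvec n f c t).toNat⟩, ?_, ?_⟩
    · rw [Finset.mem_sigma]
      refine ⟨ha, mem_Wset.2 ⟨?_, ?_⟩⟩
      · intro i hi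
        have := h2 i hi
        dsimp only
        omega
      · zify
        simp only [hcoe]
        rw [Finset.sum_sub_distrib, ha2.2]
        unfold zvec
        rw [Finset.sum_sub_distrib, ← hgz]
        have : (∑ i, (c i : ℤ)) ≤ (g : ℤ) + k := by exact_mod_cast hs
        linarith
    · funext t
      dsimp only
      rw [hcoe]
      unfold zvec
      omega

/-- deficiency -/
def dd (n : ℕ) (f : Finset (Fin n) → ℕ) (I : Finset (Fin n)) : ℤ :=
  (∑ i ∈ I, (f {i} : ℤ)) - (f I : ℤ)

lemma dd_super {n : ℕ} {f : Finset (Fin n) → ℕ} (hf : IsPolymatroidRank n f)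
    (I J : Finset (Fin n)) : dd n f I + dd n f J ≤ dd n f (I ∪ J) + dd n f (I ∩ J) := by
  have h1 := submod_int hf I J
  have h4 := Finset.sum_union_inter (s₁ := I) (s₂ := J) (f := fun i => (f {i} : ℤ))
  unfold dd
  linarith

lemma dd_empty {n : ℕ} {f : Finset (Fin n) → ℕ} (hf : IsPolymatroidRank n f) :
    dd n f ∅ = 0 := by
  simp [dd, hf.1]

lemma dd_nonneg {n : ℕ} {f : Finset (Fin n) → ℕ} (hf : IsPolymatroidRank n f)
    (I : Finset (Fin n)) : 0 ≤ dd n f I := by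
  induction I using Finset.induction_on with
  | empty => rw [dd_empty hf]
  | insert x S hx ih =>
    have h := dd_super hf {x} S
    have h2 : dd n f {x} = 0 := by simp [dd]
    have h3 : ({x} : Finset (Fin n)) ∩ S = ∅ := by
      rw [Finset.singleton_inter_of_notMem hx]
    rw [h3, dd_empty hf, h2, ← Finset.insert_eq] at h
    linarith

lemma dd_mono {n : ℕ} {f : Finset (Fin n) → ℕ} (hf : IsPolymatroidRank n f)
    {I J : Finset (Fin n)} (h : I ⊆ J) : dd n f I ≤ dd n f J := by
  have h1 := dd_super hf I (J \ I)
  rw [Finset.union_sdiff_of_subset h, Finset.inter_sdiff_self, dd_empty hf] at h1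
  have := dd_nonneg hf (J \ I)
  linarith

lemma okv_iff {n : ℕ} (f : Finset (Fin n) → ℕ) (c : Fin n → ℕ) :
    okv n f (zvec n f c) ↔ ∀ I : Finset (Fin n), dd n f I ≤ ∑ i ∈ I, (c i : ℤ) := by
  unfold okv zvec dd
  refine forall_congr' fun I => ?_
  rw [Finset.sum_sub_distrib]
  constructor <;> intro h <;> linarith

/-- small circuits -/
def circ (n : ℕ) (f : Finset (Fin n) → ℕ) (r : ℕ) : Finset (Finset (Fin n)) :=
  Finset.univ.filter fun C => C ∈ Cset n f C.card ∧ C.card < r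

/-- violated by a large set -/
def Large (n : ℕ) (f : Finset (Fin n) → ℕ) (r : ℕ) (c : Fin n → ℕ) : Prop :=
  ∃ I : Finset (Fin n), r ≤ I.card ∧ ∑ i ∈ I, (c i : ℤ) < dd n f I

lemma mem_circ {n : ℕ} {f : Finset (Fin n) → ℕ} {r : ℕ} {C : Finset (Fin n)} :
    C ∈ circ n f r ↔ (dd n f C = 1 ∧ ∀ j ∈ C, dd n f (C.erase j) = 0) ∧ C.card < r := by
  simp only [circ, Cset, dd, Finset.mem_filter, Finset.mem_univ, true_and, sub_eq_zero]

lemma rk_le {n : ℕ} {f : Finset (Fin n) → ℕ} {F : Finset (Fin n)} (h : 2 ≤ dd n f F) :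
    rk' n f 2 ≤ F.card :=
  Nat.sInf_le ⟨F, by simpa [dd] using h, rfl⟩

open Classical in
lemma pointwise {n : ℕ} {f : Finset (Fin n) → ℕ} (hf : IsPolymatroidRank n f)
    {c : Fin n → ℕ} (hL : ¬ Large n f (rk' n f 2) c) :
    (∑ C ∈ circ n f (rk' n f 2), if (∀ x ∈ C, c x = 0) then (1 : ℤ) else 0) =
      if okv n f (zvec n f c) then 0 else 1 := by
  have hzero : ∀ C : Finset (Fin n), (∀ x ∈ C, c x = 0) → ∑ i ∈ C, (c i : ℤ) = 0 := by
    intro C h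
    exact Finset.sum_eq_zero fun x hx => by rw [h x hx]; rfl
  have hsmall : ∀ F : Finset (Fin n), F.card < rk' n f 2 → dd n f F ≤ 1 := by
    intro F hF
    by_contra h
    have := rk_le (f := f) (F := F) (by omega)
    omega
  split_ifs with hok
  · rw [okv_iff] at hok
    refine Finset.sum_eq_zero fun C hC => ?_
    rw [if_neg]
    intro h
    have h1 := hok C
    rw [hzero C h, (mem_circ.1 hC).1.1] at h1
    omega
  · rw [okv_iff] at hok
    push Not at hok
    obtain ⟨I, hI⟩ := hok
    have hIr : I.card < rk' n f 2 := by
      by_contra h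
      exact hL ⟨I, not_lt.1 h, hI⟩
    have hd := hsmall I hIr
    have hs0 : (0 : ℤ) ≤ ∑ i ∈ I, (c i : ℤ) := by positivity
    have hsz : ∑ i ∈ I, (c i : ℤ) = 0 := by omega
    have hcz : ∀ x ∈ I, c x = 0 := by
      intro x hx
      have := (Finset.sum_eq_zero_iff_of_nonneg (fun i _ => by positivity)).1 hsz x hx
      exact_mod_cast this
    obtain ⟨C, hC, hmin⟩ := Finset.exists_min_image
      (Finset.univ.filter fun C : Finset (Fin n) => C ⊆ I ∧ 1 ≤ dd n f C) Finset.card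
      ⟨I, by simp; omega⟩
    simp only [Finset.mem_filter, Finset.mem_univ, true_and] at hC hmin
    have hCr : C.card < rk' n f 2 := lt_of_le_of_lt (Finset.card_le_card hC.1) hIr
    have hCc : C ∈ circ n f (rk' n f 2) := by
      refine mem_circ.2 ⟨⟨?_, ?_⟩, hCr⟩
      · have := hsmall C hCr
        omega
      · intro j hj
        by_contra h
        have h0 := dd_nonneg hf (C.erase j)
        have := hmin (C.erase j) ⟨(Finset.erase_subset _ _).trans hC.1, by omega⟩
        have := Finset.card_erase_lt_of_mem hj
        omega
    rw [Finset.sum_eq_single_of_mem C hCc]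
    · rw [if_pos fun x hx => hcz x (hC.1 hx)]
    · intro C' hC' hne
      rw [if_neg]
      intro h
      apply hL
      have hd1 := (mem_circ.1 hC').1.1
      have hd2 := (mem_circ.1 hCc).1.1
      have h1 := dd_super hf C C'
      have hinter : dd n f (C ∩ C') ≤ 0 := by
        by_cases hsub : C ⊆ C'
        · obtain ⟨x, hx, hxC⟩ := Finset.exists_of_ssubset (hsub.ssubset_of_ne hne.symm)
          have e1 := (mem_circ.1 hC').1.2 x hx
          rw [← e1]
          refine dd_mono hf fun y hy => Finset.mem_erase.2 ⟨?_, (Finset.mem_inter.1 hy).2⟩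
          rintro rfl
          exact hxC (Finset.mem_inter.1 hy).1
        · obtain ⟨x, hx, hxC⟩ := Finset.not_subset.1 hsub
          have e1 := (mem_circ.1 hCc).1.2 x hx
          rw [← e1]
          refine dd_mono hf fun y hy => Finset.mem_erase.2 ⟨?_, (Finset.mem_inter.1 hy).1⟩
          rintro rfl
          exact hxC (Finset.mem_inter.1 hy).2
      have h2 : 2 ≤ dd n f (C ∪ C') := by linarith
      refine ⟨C ∪ C', rk_le h2, ?_⟩
      rw [hzero]
      · omega
      · intro x hx
        rcases Finset.mem_union.1 hx with hx | hx
        · exact hcz x (hC.1 hx)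
        · exact h x hx

open Classical in
lemma large_card {n : ℕ} {f : Finset (Fin n) → ℕ} (hf : IsPolymatroidRank n f)
    (g : ℕ) (hg : g + f Finset.univ = ∑ i : Fin n, f {i}) (r k : ℕ) :
    ((Wset n Finset.univ (g + k)).filter fun c => Large n f r c).card ≤
      2 ^ n * ((g + 1) ^ n * (k + 1) ^ (n - r)) := by
  have hgz : (g : ℤ) + f Finset.univ = ∑ i : Fin n, (f {i} : ℤ) := by exact_mod_cast hg
  have hsub : ((Wset n Finset.univ (g + k)).filter fun c => Large n f r c) ⊆
      (Finset.univ.filter fun I : Finset (Fin n) => r ≤ I.card).biUnion fun I =>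
        Fintype.piFinset fun x => if x ∈ I then Finset.range (g + 1)
          else Finset.range ((g + 1) * (k + 1)) := by
    intro c hc
    rw [Finset.mem_filter, mem_Wset] at hc
    obtain ⟨⟨_, hs⟩, I, hI, hlt⟩ := hc
    rw [Finset.mem_biUnion]
    refine ⟨I, by simp [hI], ?_⟩
    rw [Fintype.mem_piFinset]
    intro x
    split_ifs with hx
    · rw [Finset.mem_range]
      have h1 := dd_mono hf (Finset.subset_univ I)
      have h2 : dd n f Finset.univ = g := by
        unfold dd
        linarith
      have h3 : (c x : ℤ) ≤ ∑ i ∈ I, (c i : ℤ) :=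
        Finset.single_le_sum (f := fun i => (c i : ℤ)) (fun i _ => by positivity) hx
      omega
    · rw [Finset.mem_range]
      have h3 : c x ≤ ∑ i, c i :=
        Finset.single_le_sum (fun i _ => Nat.zero_le _) (Finset.mem_univ x)
      nlinarith
  refine le_trans (Finset.card_le_card hsub) ?_
  refine le_trans Finset.card_biUnion_le ?_
  refine le_trans (Finset.sum_le_card_nsmul _ _ ((g + 1) ^ n * (k + 1) ^ (n - r)) ?_) ?_
  · intro I hI
    simp only [Finset.mem_filter, Finset.mem_univ, true_and] at hI
    rw [Fintype.card_piFinset]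
    have : ∀ x : Fin n, (if x ∈ I then Finset.range (g + 1)
          else Finset.range ((g + 1) * (k + 1))).card = (g + 1) * (if x ∈ I then 1 else k + 1) := by
      intro x
      split_ifs <;> simp
    simp only [this]
    rw [Finset.prod_mul_distrib, Finset.prod_ite]
    simp only [Finset.prod_const, Finset.card_univ, Fintype.card_fin, one_pow, one_mul]
    refine Nat.mul_le_mul_left _ (Nat.pow_le_pow_right (Nat.succ_pos k) ?_)
    rw [Finset.filter_not, Finset.card_sdiff_of_subset (Finset.filter_subset _ _)]
    simp
    omega
  · rw [smul_eq_mul]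
    refine Nat.mul_le_mul_right _ ?_
    refine le_trans (Finset.card_le_univ _) ?_
    simp

open Classical in
lemma main_bound {n : ℕ} {f : Finset (Fin n) → ℕ} (hf : IsPolymatroidRank n f)
    (g : ℕ) (hg : g + f Finset.univ = ∑ i : Fin n, f {i}) (k : ℕ) :
    |(∑ i ∈ Finset.range (n + 1), (interiorPoly n f).coeff i *
        ((k + (n - i)).choose (n - i) : ℤ)) - ((g + k + n).choose n : ℤ) +
      ∑ C ∈ circ n f (rk' n f 2), ((g + k + (n - C.card)).choose (n - C.card) : ℤ)| ≤
    (((circ n f (rk' n f 2)).card + 1 : ℤ) * (2 ^ n * (g + 1) ^ n)) *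
      ((k : ℤ) + 1) ^ (n - rk' n f 2) := by
  set r := rk' n f 2 with hr
  set W := Wset n Finset.univ (g + k) with hW
  have h1 : (∑ i ∈ Finset.range (n + 1), (interiorPoly n f).coeff i *
        ((k + (n - i)).choose (n - i) : ℤ)) =
      ∑ c ∈ W, (if okv n f (zvec n f c) then (1 : ℤ) else 0) := by
    rw [coeff_sum, Finset.sum_boole, card_good hf g hg k]
    push_cast
    rfl
  have h2 : ((g + k + n).choose n : ℤ) = ∑ c ∈ W, (1 : ℤ) := by
    have := card_Wset (n := n) Finset.univ (g + k)
    simp only [Finset.card_univ, Fintype.card_fin] at this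
    rw [← this]
    simp [hW]
  have h3 : ∑ C ∈ circ n f r, ((g + k + (n - C.card)).choose (n - C.card) : ℤ) =
      ∑ c ∈ W, ∑ C ∈ circ n f r, (if (∀ x ∈ C, c x = 0) then (1 : ℤ) else 0) := by
    rw [Finset.sum_comm]
    refine Finset.sum_congr rfl fun C _ => ?_
    rw [Finset.sum_boole]
    have := card_Wset (n := n) Cᶜ (g + k)
    rw [Finset.card_compl, Fintype.card_fin] at this
    rw [← this]
    congr 2
    ext c
    rw [Finset.mem_filter, hW, mem_Wset, mem_Wset]
    simp only [Finset.mem_compl, not_not, Finset.mem_univ, not_true_eq_false, false_imp_iff,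
      implies_true, true_and]
    exact and_comm
  rw [h1, h2, h3, ← Finset.sum_sub_distrib, ← Finset.sum_add_distrib]
  have hpt : ∀ c ∈ W, |(if okv n f (zvec n f c) then (1 : ℤ) else 0) - 1 +
      ∑ C ∈ circ n f r, (if (∀ x ∈ C, c x = 0) then (1 : ℤ) else 0)| ≤
      if Large n f r c then ((circ n f r).card + 1 : ℤ) else 0 := by
    intro c _
    split_ifs with hok hL hL
    · rw [sub_self, zero_add, Finset.sum_boole, abs_of_nonneg (by positivity)]
      have := Finset.card_filter_le (circ n f r) (fun C => ∀ x ∈ C, c x = 0)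
      have : (((circ n f r).filter (fun C => ∀ x ∈ C, c x = 0)).card : ℤ) ≤
        (circ n f r).card := by exact_mod_cast this
      linarith
    · rw [pointwise hf hL, if_pos hok]
      simp
    · rw [Finset.sum_boole]
      have := Finset.card_filter_le (circ n f r) (fun C => ∀ x ∈ C, c x = 0)
      have h5 : (((circ n f r).filter (fun C => ∀ x ∈ C, c x = 0)).card : ℤ) ≤
        (circ n f r).card := by exact_mod_cast this
      have h6 : (0 : ℤ) ≤ (((circ n f r).filter (fun C => ∀ x ∈ C, c x = 0)).card : ℤ) := by
        positivity
      rw [abs_le]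
      constructor <;> linarith
    · rw [pointwise hf hL, if_neg hok]
      simp
  refine le_trans (Finset.abs_sum_le_sum_abs _ _) (le_trans (Finset.sum_le_sum hpt) ?_)
  rw [← Finset.sum_filter, Finset.sum_const, nsmul_eq_mul]
  have hlc : (((W.filter fun c => Large n f r c).card : ℕ) : ℤ) ≤
      2 ^ n * ((g + 1) ^ n * ((k : ℤ) + 1) ^ (n - r)) := by
    exact_mod_cast large_card hf g hg r k
  calc _ ≤ (2 ^ n * ((g + 1) ^ n * ((k : ℤ) + 1) ^ (n - r))) * ((circ n f r).card + 1 : ℤ) :=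
        mul_le_mul_of_nonneg_right hlc (by positivity)
    _ = _ := by ring

/-- For a polymatroid `P ⊆ ℤ^n_{≥0}` with rank function `f`,
`g = ∑_{i ∈ [n]} f {i} - f [n]`, and every `0 ≤ i < r'_2(P)`, the coefficient of `x^i`
in the interior polynomial is
`C(g+i-1, i) - ∑_{j=0}^{i} C(g+i-1-j, i-j) * |C_j(P)|`. -/
theorem stmt1 (n : ℕ) (f : Finset (Fin n) → ℕ) (hf : IsPolymatroidRank n f)
    (g : ℕ) (hg : g + f Finset.univ = ∑ i : Fin n, f {i})
    (i : ℕ) (hi : i < rk' n f 2) :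
    (interiorPoly n f).coeff i =
      ((g + i - 1).choose i : ℤ) -
        ∑ j ∈ Finset.range (i + 1),
          ((g + i - 1 - j).choose (i - j) : ℤ) * ((Cset n f j).card : ℤ) := by
  set r := rk' n f 2 with hr
  have hne : {m | ∃ F : Finset (Fin n), ((2 : ℕ) : ℤ) ≤ (∑ i ∈ F, (f {i} : ℤ)) - (f F : ℤ) ∧
      m = F.card}.Nonempty := by
    rw [Set.nonempty_iff_ne_empty]
    intro h
    have : r = 0 := by
      rw [hr]
      unfold rk'
      rw [h]
      exact Nat.sInf_empty
    omega
  obtain ⟨F, hF, hFr⟩ := Nat.sInf_mem hne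
  change r = F.card at hFr
  have hrn : r ≤ n := by
    rw [hFr]
    simpa using Finset.card_le_univ F
  have hgz : (g : ℤ) + f Finset.univ = ∑ i : Fin n, (f {i} : ℤ) := by exact_mod_cast hg
  have hg1 : 1 ≤ g := by
    have h1 := dd_mono hf (Finset.subset_univ F)
    have h2 : dd n f Finset.univ = g := by
      unfold dd
      linarith
    have h3 : (2 : ℤ) ≤ dd n f F := by
      unfold dd
      exact_mod_cast hF
    omega
  have hmain := asymp n r hrn (fun i => (interiorPoly n f).coeff i -
      ((if 0 ≤ i then ((g + i - 1 - 0).choose (i - 0) : ℤ) else 0) -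
        ∑ C ∈ circ n f r, (if C.card ≤ i then
          ((g + i - 1 - C.card).choose (i - C.card) : ℤ) else 0)))
      (((circ n f r).card + 1 : ℤ) * (2 ^ n * (g + 1) ^ n)) (by
    intro k
    refine le_trans (le_of_eq ?_) (main_bound hf g hg k)
    congr 1
    simp only [sub_mul, Finset.sum_sub_distrib]
    rw [conv_shift g k n 0 hg1 (Nat.zero_le n)]
    simp only [Finset.sum_mul]
    rw [Finset.sum_comm]
    rw [Finset.sum_congr rfl fun C (_ : C ∈ circ n f r) => conv_shift g k n C.card hg1
      (by simpa using Finset.card_le_univ C)]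
    rw [Nat.sub_zero]
    ring) i hi
  simp only [Nat.zero_le, if_true, Nat.sub_zero] at hmain
  have hsum : ∑ j ∈ Finset.range (i + 1),
          ((g + i - 1 - j).choose (i - j) : ℤ) * ((Cset n f j).card : ℤ) =
      ∑ C ∈ circ n f r, (if C.card ≤ i then
          ((g + i - 1 - C.card).choose (i - C.card) : ℤ) else 0) := by
    rw [← Finset.sum_filter]
    rw [← Finset.sum_fiberwise_of_maps_to (s := (circ n f r).filter fun C => C.card ≤ i)
      (t := Finset.range (i + 1)) (g := Finset.card)]
    · refine Finset.sum_congr rfl fun j hj => ?_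
      rw [Finset.mem_range] at hj
      have : ((circ n f r).filter fun C => C.card ≤ i).filter (fun C => C.card = j) =
          Cset n f j := by
        ext C
        simp only [circ, Cset, Finset.mem_filter, Finset.mem_univ, true_and]
        constructor
        · rintro ⟨⟨⟨h1, _⟩, _⟩, h2⟩
          exact ⟨h2, h1⟩
        · rintro ⟨h2, h1⟩
          exact ⟨⟨⟨h1, by omega⟩, by omega⟩, h2⟩
      rw [← this, mul_comm, ← nsmul_eq_mul, ← Finset.sum_const]
      refine Finset.sum_congr rfl fun C hC => ?_
      rw [(Finset.mem_filter.1 hC).2]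
    · intro C hC
      rw [Finset.mem_range]
      have := (Finset.mem_filter.1 hC).2
      omega
  rw [hsum]
  linarith
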